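/- arXiv:1310.5921 — 7 statements merged into one kernel-verified Lean document; each statement's English description precedes it below -/
import Mathlib

section
/- For every integer k ≥ 1 and every real number t ≠ 0, the k-th derivative of the function f(t) = 1/(e^t − 1) satisfies f^{(k)}(t) = Σ_{m=1}^{k+1} (−1)^{m−1} (m−1)! S(k+1, m) (1/(1 − e^{−t}))^m. -/
open Real Finset

/-- Stirling numbers of the second kind, real-valued, via the explicit formula
`S(k,m) = (1/m!) ∑_{ℓ=1}^m (-1)^(m-ℓ) C(m,ℓ) ℓ^k`; this gives `0` when `m > k`. -/
noncomputable def S2 (k m : ℕ) : ℝ :=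
  (1 / (Nat.factorial m : ℝ)) *
    ∑ ℓ ∈ Finset.Icc 1 m, (-1 : ℝ) ^ (m - ℓ) * (Nat.choose m ℓ : ℝ) * (ℓ : ℝ) ^ k

/-!
The function `g t = 1 / (1 - exp (-t))` differs from `1 / (exp t - 1)` by the constant `1` and
satisfies the logistic equation `g' = g - g ^ 2`. Each differentiation of a polynomial in `g`
therefore applies the operator `P ↦ (X - X ^ 2) * P'`, and the recurrence of the Stirling numbers
of the second kind is what this operator does to the coefficients, up to the factor
`(-1) ^ m * m!`. The explicit formula defining `S2` is the `m`-th forward difference of `x ^ k` at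
`0`, which satisfies the same recurrence by the Leibniz rule for `x * x ^ k`.
-/

open Polynomial
open scoped Nat

section ForwardDifference

variable {R M : Type*} [CommRing R] [AddCommGroup M] [Module R M]

theorem fwdDiff_iter_succ_id_smul (h : R) (f : R → M) (n : ℕ) (y : R) :
    (fwdDiff h)^[n + 1] (fun x ↦ x • f x) y =
      (y + (n + 1) * h) • (fwdDiff h)^[n + 1] f y + ((n + 1) * h) • (fwdDiff h)^[n] f y := by
  induction n generalizing y with
  | zero =>
    simp only [zero_add, Function.iterate_one, Function.iterate_zero, id_eq, fwdDiff,
      Nat.cast_zero, one_mul]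
    module
  | succ n ih =>
    have shift (j : ℕ) :
        (fwdDiff h)^[j] f (y + h) = (fwdDiff h)^[j + 1] f y + (fwdDiff h)^[j] f y := by
      rw [Function.iterate_succ_apply' _ j, fwdDiff, sub_add_cancel]
    rw [Function.iterate_succ_apply', fwdDiff, ih, ih, shift, shift]
    push_cast
    module

theorem fwdDiff_iter_pow_apply_zero (k m : ℕ) :
    (fwdDiff 1)^[m] (fun x : R ↦ x ^ k) 0 = m ! * Nat.stirlingSecond k m := by
  induction k generalizing m with
  | zero =>
    cases m with
    | zero => simp
    | succ m =>
      simp only [fwdDiff_iter_pow_eq_zero_of_lt m.succ_pos, Pi.zero_apply,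
        Nat.stirlingSecond_zero_succ, Nat.cast_zero, mul_zero]
  | succ k ih =>
    cases m with
    | zero => simp
    | succ m =>
      calc (fwdDiff 1)^[m + 1] (fun x : R ↦ x ^ (k + 1)) 0
        _ = (fwdDiff 1)^[m + 1] (fun x : R ↦ x • x ^ k) 0 := by simp only [pow_succ', smul_eq_mul]
        _ = (m + 1) * ((m + 1)! * Nat.stirlingSecond k (m + 1)) +
            (m + 1) * (m ! * Nat.stirlingSecond k m) := by
          rw [fwdDiff_iter_succ_id_smul, ih, ih, zero_add, mul_one, smul_eq_mul, smul_eq_mul]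
        _ = (m + 1)! * Nat.stirlingSecond (k + 1) (m + 1) := by
          rw [Nat.stirlingSecond_succ_succ, Nat.factorial_succ]
          push_cast
          ring

end ForwardDifference

theorem S2_eq_stirlingSecond {k : ℕ} (hk : k ≠ 0) (m : ℕ) : S2 k m = Nat.stirlingSecond k m := by
  have explicit : ∑ ℓ ∈ Icc 1 m, (-1 : ℝ) ^ (m - ℓ) * m.choose ℓ * (ℓ : ℝ) ^ k =
      (fwdDiff 1)^[m] (fun x : ℝ ↦ x ^ k) 0 := by
    rw [fwdDiff_iter_eq_sum_shift, range_eq_Ico, sum_eq_sum_Ico_succ_bot m.succ_pos]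
    simp [hk, Ico_add_one_right_eq_Icc]
  rw [S2, explicit, fwdDiff_iter_pow_apply_zero, one_div,
    inv_mul_cancel_left₀ (Nat.cast_ne_zero.mpr m.factorial_ne_zero)]

section LogisticPolynomial

variable {R : Type*} [CommRing R]

theorem X_sub_X_sq_mul_derivative_C_mul_X_pow (c : R) (m : ℕ) :
    (X - X ^ 2) * derivative (C c * X ^ m) = C (m * c) * X ^ m - C (m * c) * X ^ (m + 1) := by
  cases m with
  | zero => simp
  | succ m =>
    rw [derivative_C_mul_X_pow, Nat.add_sub_cancel, mul_comm c]
    ring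

variable (R) in
/-- The polynomial in `g` that gives the `n`-th derivative of a solution `g` of the logistic
equation `g' = g - g ^ 2`. The sum is indexed by the exponent minus one. -/
noncomputable def logisticPolynomial (n : ℕ) : R[X] :=
  ∑ m ∈ range (n + 1), C ((-1) ^ m * m ! * Nat.stirlingSecond (n + 1) (m + 1) : R) * X ^ (m + 1)

theorem X_sub_X_sq_mul_derivative_logisticPolynomial (n : ℕ) :
    (X - X ^ 2) * derivative (logisticPolynomial R n) = logisticPolynomial R (n + 1) := by
  -- `a` and `b` are the two parts into which the Stirling recurrence splits each coefficient.
  let S (m : ℕ) : R := Nat.stirlingSecond (n + 1) m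
  let a (m : ℕ) : R := (-1) ^ m * m ! * ((m + 1) * S (m + 1))
  let b (m : ℕ) : R := (-1) ^ m * m ! * S m
  have a_top : a (n + 1) = 0 := by
    simp [a, S, Nat.stirlingSecond_eq_zero_of_lt (Nat.lt_succ_self (n + 1))]
  have b_zero : b 0 = 0 := by simp [b, S]
  have derivative_term (m : ℕ) :
      (X - X ^ 2) * derivative (C ((-1) ^ m * m ! * S (m + 1)) * X ^ (m + 1)) =
        C (a m) * X ^ (m + 1) + C (b (m + 1)) * X ^ (m + 1 + 1) := by
    have coeff_a : (m + 1 : ℕ) * ((-1) ^ m * m ! * S (m + 1)) = a m := by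
      simp only [a]
      push_cast
      ring
    have coeff_b : b (m + 1) = -a m := by
      simp only [a, b, Nat.factorial_succ]
      push_cast
      ring
    rw [X_sub_X_sq_mul_derivative_C_mul_X_pow, coeff_a, coeff_b, C_neg, neg_mul, sub_eq_add_neg]
  calc (X - X ^ 2) * derivative (logisticPolynomial R n)
    _ = ∑ m ∈ range (n + 1), C (a m) * X ^ (m + 1) +
        ∑ m ∈ range (n + 1), C (b (m + 1)) * X ^ (m + 1 + 1) := by
      rw [logisticPolynomial, derivative_sum, mul_sum, ← sum_add_distrib]
      exact sum_congr rfl fun m _ ↦ derivative_term m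
    _ = ∑ m ∈ range (n + 2), C (a m) * X ^ (m + 1) +
        ∑ m ∈ range (n + 2), C (b m) * X ^ (m + 1) := by
      rw [sum_range_succ _ (n + 1), sum_range_succ' _ (n + 1), a_top, b_zero]
      simp only [C_0, zero_mul, add_zero]
    _ = logisticPolynomial R (n + 1) := by
      simp only [logisticPolynomial, ← sum_add_distrib, ← add_mul, ← C_add, ← mul_add, a, b, S,
        Nat.stirlingSecond_succ_succ (n + 1), Nat.cast_add, Nat.cast_mul, Nat.cast_one]

theorem iterate_mul_derivative_X_eq_logisticPolynomial (n : ℕ) :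
    (fun P : R[X] ↦ (X - X ^ 2) * derivative P)^[n] X = logisticPolynomial R n := by
  induction n with
  | zero => simp [logisticPolynomial, Nat.stirlingSecond]
  | succ n ih =>
    rw [Function.iterate_succ_apply', ih, X_sub_X_sq_mul_derivative_logisticPolynomial]

end LogisticPolynomial

section AutonomousODE

variable {𝕜 : Type*} [NontriviallyNormedField 𝕜]

theorem iteratedDeriv_eq_eval_iterate_of_hasDerivAt_eval {g : 𝕜 → 𝕜} {Q : 𝕜[X]} {U : Set 𝕜}
    (hU : IsOpen U) (hg : ∀ x ∈ U, HasDerivAt g (Q.eval (g x)) x) (n : ℕ) :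
    Set.EqOn (iteratedDeriv n g)
      (fun x ↦ ((fun P ↦ Q * derivative P)^[n] X).eval (g x)) U := by
  induction n with
  | zero => intro x _; simp
  | succ n ih =>
    intro x hx
    rw [iteratedDeriv_succ, (ih.eventuallyEq_of_mem (hU.mem_nhds hx)).deriv_eq,
      Function.iterate_succ_apply', mul_comm]
    simp only [eval_mul]
    exact ((Polynomial.hasDerivAt _ _).comp x (hg x hx)).deriv

end AutonomousODE

section Exponential

variable {𝕜 : Type*} [RCLike 𝕜]

theorem one_div_exp_sub_one_eq {t : 𝕜} (ht : NormedSpace.exp t ≠ 1) :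
    1 / (NormedSpace.exp t - 1) = -1 + 1 / (1 - NormedSpace.exp (-t)) := by
  have exp_sub_one_ne_zero : NormedSpace.exp t - 1 ≠ 0 := sub_ne_zero.mpr ht
  have exp_ne_zero : NormedSpace.exp t ≠ 0 := (NormedSpace.isUnit_exp t).ne_zero
  rw [NormedSpace.exp_neg]
  field_simp
  ring

theorem hasDerivAt_one_div_one_sub_exp_neg {t : 𝕜} (ht : NormedSpace.exp t ≠ 1) :
    HasDerivAt (fun t : 𝕜 ↦ 1 / (1 - NormedSpace.exp (-t)))
      (1 / (1 - NormedSpace.exp (-t)) - (1 / (1 - NormedSpace.exp (-t))) ^ 2) t := by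
  have denom_ne_zero : 1 - NormedSpace.exp (-t) ≠ 0 := by
    rwa [NormedSpace.exp_neg, sub_ne_zero, ne_comm, Ne, inv_eq_one]
  have denom_deriv :
      HasDerivAt (fun t : 𝕜 ↦ 1 - NormedSpace.exp (-t)) (NormedSpace.exp (-t)) t := by
    simpa using (hasDerivAt_exp.comp t (hasDerivAt_neg t)).const_sub 1
  simp only [one_div]
  refine (denom_deriv.inv denom_ne_zero).congr_deriv ?_
  field_simp
  ring

theorem stmt_3_general (k : ℕ) (hk : 1 ≤ k) (t : 𝕜) (ht : NormedSpace.exp t ≠ 1) :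
    iteratedDeriv k (fun t : 𝕜 ↦ 1 / (NormedSpace.exp t - 1)) t =
      ∑ m ∈ Icc 1 (k + 1), (-1) ^ (m - 1) * ((m - 1)! : 𝕜) * Nat.stirlingSecond (k + 1) m *
        (1 / (1 - NormedSpace.exp (-t))) ^ m := by
  let U : Set 𝕜 := {x | NormedSpace.exp x ≠ 1}
  let g : 𝕜 → 𝕜 := fun x ↦ 1 / (1 - NormedSpace.exp (-x))
  have isOpen_U : IsOpen U := isOpen_ne.preimage NormedSpace.exp_continuous
  have logistic : ∀ x ∈ U, HasDerivAt g ((X - X ^ 2 : 𝕜[X]).eval (g x)) x := fun x hx ↦ by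
    simpa only [eval_sub, eval_pow, eval_X] using hasDerivAt_one_div_one_sub_exp_neg hx
  calc iteratedDeriv k (fun t : 𝕜 ↦ 1 / (NormedSpace.exp t - 1)) t
    _ = iteratedDeriv k (fun x ↦ -1 + g x) t :=
      Set.EqOn.iteratedDeriv_of_isOpen (fun _ hx ↦ one_div_exp_sub_one_eq hx) isOpen_U k ht
    _ = iteratedDeriv k g t := by rw [iteratedDeriv_const_add hk]
    _ = ((fun P ↦ (X - X ^ 2) * derivative P)^[k] X).eval (g t) :=
      iteratedDeriv_eq_eval_iterate_of_hasDerivAt_eval isOpen_U logistic k ht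
    _ = ∑ m ∈ range (k + 1),
          (-1) ^ m * (m ! : 𝕜) * Nat.stirlingSecond (k + 1) (m + 1) * g t ^ (m + 1) := by
      simp [iterate_mul_derivative_X_eq_logisticPolynomial, logisticPolynomial, eval_finsetSum]
    _ = _ := by
      rw [range_eq_Ico, ← Ico_add_one_right_eq_Icc, ← sum_Ico_add' _ 0 (k + 1) 1]
      rfl

end Exponential

theorem stmt_3 (k : ℕ) (hk : 1 ≤ k) (t : ℝ) (ht : t ≠ 0) :
    iteratedDeriv k (fun t : ℝ => 1 / (Real.exp t - 1)) t =
      ∑ m ∈ Finset.Icc 1 (k + 1),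
        (-1 : ℝ) ^ (m - 1) * (Nat.factorial (m - 1) : ℝ) * S2 (k + 1) m *
          (1 / (1 - Real.exp (-t))) ^ m := by
  have exp_ne_one : NormedSpace.exp t ≠ 1 := by rwa [← Real.exp_eq_exp_ℝ, Ne, Real.exp_eq_one_iff]
  simpa only [S2_eq_stirlingSecond k.succ_ne_zero, Real.exp_eq_exp_ℝ] using
    stmt_3_general k hk t exp_ne_one
end

section
/- For every integer k ≥ 1 and every real number t ≠ 0, the k-th power of the function f(t) = 1/(e^t − 1) satisfies (1/(e^t − 1))^k = (1/(k−1)!) Σ_{m=1}^{k} (−1)^{m−1} s(k, m) f^{(m−1)}(t), where f^{(m−1)} denotes the (m−1)-st derivative of f (with f^{(0)} = f). -/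
open Real Finset

/-- Signed Stirling numbers of the first kind, real-valued: the coefficient of `x^m` in
`x (x-1) ⋯ (x-k+1)`. -/
noncomputable def s1 (k m : ℕ) : ℝ := (descPochhammer ℝ k).coeff m

/-!
The function `f t = 1 / (exp t - 1)` solves the Riccati equation `f' = -(f + f ^ 2)`, so a
derivation `D` acts on it by `(D + n) (f ^ n) = -n f ^ (n + 1)`. Iterating,
`(-D - 1) (-D - 2) ⋯ (-D - n) f = n! f ^ (n + 1)`, and the coefficients of
`(x - 1) (x - 2) ⋯ (x - n)` are the Stirling numbers `s(n + 1, m + 1)`. The Riccati equation also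
turns every derivative of `f` into a polynomial in `f`, so the operator identity may be proved in
the polynomial ring, with `D` the derivation sending `X` to `-(X + X ^ 2)`.
-/

open Polynomial
open scoped Nat

section Algebra

variable {R : Type*} [CommRing R]

lemma descPochhammer_comp_neg_X_sub_one_succ (n : ℕ) :
    (descPochhammer R (n + 1)).comp (-X - 1) =
      (-X - (n + 1 : R[X])) * (descPochhammer R n).comp (-X - 1) := by
  rw [descPochhammer_succ_right, mul_comp, sub_comp, X_comp, natCast_comp]
  ring

lemma coeff_descPochhammer_comp_neg_X_sub_one (n m : ℕ) :
    ((descPochhammer R n).comp (-X - 1)).coeff m =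
      (-1) ^ m * (descPochhammer R (n + 1)).coeff (m + 1) := by
  have h : (descPochhammer R n).comp (-X - 1) =
      ((descPochhammer R n).comp (X - 1)).comp (C (-1) * X) := by
    simp [comp_assoc]
  rw [h, comp_C_mul_X_coeff, descPochhammer_succ_left, coeff_X_mul, mul_comm]

lemma natDegree_descPochhammer_comp_neg_X_sub_one_le (n : ℕ) :
    ((descPochhammer R n).comp (-X - 1)).natDegree ≤ n := by
  induction n with
  | zero => simp
  | succ n ih =>
    rw [descPochhammer_comp_neg_X_sub_one_succ, add_comm n 1]
    refine natDegree_mul_le_of_le ?_ ih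
    compute_degree

lemma aeval_derivation_descPochhammer_comp_of_riccati {A : Type*} [CommRing A] [Algebra R A]
    (D : Derivation R A A) {a : A} (ha : D a = -(a + a ^ 2)) (n : ℕ) :
    aeval (D : Module.End R A) ((descPochhammer R n).comp (-X - 1)) a = n ! * a ^ (n + 1) := by
  induction n with
  | zero => simp
  | succ n ih =>
    have hD : D (n ! * a ^ (n + 1)) = -(n ! * (n + 1) * (a ^ (n + 1) + a ^ (n + 2))) := by
      simp only [Derivation.leibniz, Derivation.leibniz_pow, Derivation.map_natCast, ha,
        add_tsub_cancel_right, smul_eq_mul, nsmul_eq_mul, Nat.cast_add, Nat.cast_one]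
      ring
    calc aeval (D : Module.End R A) ((descPochhammer R (n + 1)).comp (-X - 1)) a
        = -D (n ! * a ^ (n + 1)) - (n + 1) * (n ! * a ^ (n + 1)) := by
          rw [descPochhammer_comp_neg_X_sub_one_succ, map_mul, Module.End.mul_apply, ih]
          simp [add_mul]
      _ = (n + 1)! * a ^ (n + 1 + 1) := by
          rw [hD, Nat.factorial_succ]
          push_cast
          ring

end Algebra

section Analysis

variable {𝕜 A : Type*} [NontriviallyNormedField 𝕜] [NormedCommRing A] [NormedAlgebra 𝕜 A]
  {f : 𝕜 → A}

lemma hasDerivAt_aeval_mkDerivation {v : 𝕜[X]} {t : 𝕜} (hf : HasDerivAt f (aeval (f t) v) t)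
    (p : 𝕜[X]) :
    HasDerivAt (fun x ↦ aeval (f x) p) (aeval (f t) (mkDerivation 𝕜 v p)) t := by
  induction p using Polynomial.induction_on' with
  | add p q hp hq => simpa using hp.fun_add hq
  | monomial n c =>
    simpa [aeval_monomial, mkDerivation_apply, derivative_monomial, mul_assoc, Algebra.smul_def]
      using (hf.fun_pow n).fun_const_smul c

lemma iteratedDeriv_eq_aeval_mkDerivation {v : 𝕜[X]} {S : Set 𝕜} (hS : IsOpen S)
    (hf : ∀ t ∈ S, HasDerivAt f (aeval (f t) v) t) (n : ℕ) {t : 𝕜} (ht : t ∈ S) :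
    iteratedDeriv n f t = aeval (f t) (((mkDerivation 𝕜 v : Module.End 𝕜 𝕜[X]) ^ n) X) := by
  induction n generalizing t with
  | zero => simp
  | succ n ih =>
    have h : iteratedDeriv n f =ᶠ[nhds t] _ := Filter.eventuallyEq_of_mem (hS.mem_nhds ht) @ih
    rw [iteratedDeriv_succ, h.deriv_eq, pow_succ', Module.End.mul_apply]
    exact (hasDerivAt_aeval_mkDerivation (hf t ht) _).deriv

theorem stmt_5_general {S : Set 𝕜} (hS : IsOpen S)
    (hf : ∀ t ∈ S, HasDerivAt f (-(f t + f t ^ 2)) t) {k : ℕ} (hk : 1 ≤ k) {t : 𝕜} (ht : t ∈ S) :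
    ((k - 1)! : A) * f t ^ k =
      ∑ m ∈ Icc 1 k,
        ((-1) ^ (m - 1) * (descPochhammer 𝕜 k).coeff m) • iteratedDeriv (m - 1) f t := by
  obtain ⟨n, rfl⟩ := Nat.exists_eq_add_of_le' hk
  let v : 𝕜[X] := -(X + X ^ 2)
  let D : Derivation 𝕜 𝕜[X] 𝕜[X] := mkDerivation 𝕜 v
  let q : 𝕜[X] := (descPochhammer 𝕜 n).comp (-X - 1)
  have hv : ∀ t ∈ S, HasDerivAt f (aeval (f t) v) t := by simpa [v] using hf
  have hq : aeval (D : Module.End 𝕜 𝕜[X]) q X = (n ! : 𝕜[X]) * X ^ (n + 1) :=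
    aeval_derivation_descPochhammer_comp_of_riccati D (mkDerivation_X ..) n
  have hdeg : q.natDegree < n + 1 :=
    Nat.lt_succ_of_le (natDegree_descPochhammer_comp_neg_X_sub_one_le n)
  calc (n ! : A) * f t ^ (n + 1)
      = aeval (f t) (aeval (D : Module.End 𝕜 𝕜[X]) q X) := by simp [hq]
    _ = ∑ m ∈ range (n + 1), q.coeff m • iteratedDeriv m f t := by
      simp [aeval_eq_sum_range' hdeg, iteratedDeriv_eq_aeval_mkDerivation hS hv _ ht, D]
    _ = ∑ m ∈ Icc 1 (n + 1),
          ((-1) ^ (m - 1) * (descPochhammer 𝕜 (n + 1)).coeff m) • iteratedDeriv (m - 1) f t := by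
      rw [← Ico_succ_right_eq_Icc, sum_Ico_eq_sum_range]
      simp [q, coeff_descPochhammer_comp_neg_X_sub_one, add_comm 1]

end Analysis

lemma hasDerivAt_one_div_exp_sub_one {t : ℝ} (ht : t ≠ 0) :
    HasDerivAt (fun t : ℝ ↦ 1 / (Real.exp t - 1))
      (-(1 / (Real.exp t - 1) + (1 / (Real.exp t - 1)) ^ 2)) t := by
  have h : Real.exp t - 1 ≠ 0 := sub_ne_zero.mpr (Real.exp_eq_one_iff t |>.not.mpr ht)
  refine ((hasDerivAt_const t (1 : ℝ)).fun_div
    ((Real.hasDerivAt_exp t).sub_const 1) h).congr_deriv ?_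
  field_simp
  ring

theorem stmt_5 (k : ℕ) (hk : 1 ≤ k) (t : ℝ) (ht : t ≠ 0) :
    (1 / (Real.exp t - 1)) ^ k =
      (1 / (Nat.factorial (k - 1) : ℝ)) *
        ∑ m ∈ Finset.Icc 1 k,
          (-1 : ℝ) ^ (m - 1) * s1 k m *
            iteratedDeriv (m - 1) (fun t : ℝ => 1 / (Real.exp t - 1)) t := by
  rw [one_div_mul_eq_div, eq_div_iff (by positivity), mul_comm]
  exact stmt_5_general isOpen_ne (fun _ ↦ hasDerivAt_one_div_exp_sub_one) hk ht
end

section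
/- For every integer k ≥ 1 and every real number t ≠ 0, one has (1/(1 − e^{−t}))^k = 1 + ((−1)^{k−1}/(k−1)!) Σ_{m=1}^{k} s(k, m) f^{(m−1)}(t), where f(t) = 1/(e^t − 1) and f^{(m−1)} denotes its (m−1)-st derivative (with f^{(0)} = f). -/
open Real Finset

/-!
Write `D = d/dt`. Since `X (X - 1) ⋯ (X - n) = ∑ s(n + 1, m) X ^ m`, the sum over `m` in the
theorem (with `k = n + 1`) is `(D - 1) ⋯ (D - n) f`. The function `f` solves the Riccati equation
`f' = -f (1 + f)`, so that `u = 1 + f` satisfies `u' = u - u ^ 2` and each factor raises the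
exponent of `u` by one: `(D - j) (u ^ j - 1) = -j (u ^ (j + 1) - 1)`. Starting from `f = u - 1`,
the factors `D - 1, …, D - n` therefore produce `(-1) ^ n n! (u ^ (n + 1) - 1)`.
-/

open Polynomial
open scoped ContDiff

section DifferentialOperator

variable {𝕜 F : Type*} [NontriviallyNormedField 𝕜] [NormedAddCommGroup F] [NormedSpace 𝕜 F]

/-- The value `(p(D) f)(t)` of the constant-coefficient differential operator `p(D)`, `D = d/dt`,
as a linear function of the polynomial `p`. -/
noncomputable def polyDeriv (f : 𝕜 → F) (t : 𝕜) : 𝕜[X] →ₗ[𝕜] F :=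
  lsum fun m => LinearMap.toSpanSingleton 𝕜 F (iteratedDeriv m f t)

theorem polyDeriv_monomial (f : 𝕜 → F) (t : 𝕜) (m : ℕ) (a : 𝕜) :
    polyDeriv f t (monomial m a) = a • iteratedDeriv m f t := by
  simp [polyDeriv]

theorem polyDeriv_eq_sum_range (f : 𝕜 → F) (t : 𝕜) {p : 𝕜[X]} {n : ℕ} (hn : p.natDegree < n) :
    polyDeriv f t p = ∑ m ∈ range n, p.coeff m • iteratedDeriv m f t :=
  p.sum_over_range' (fun _ => map_zero _) n hn

theorem hasDerivAt_iteratedDeriv {f : 𝕜 → F} {t : 𝕜} (hf : ContDiffAt 𝕜 ∞ f t) (m : ℕ) :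
    HasDerivAt (iteratedDeriv m f) (iteratedDeriv (m + 1) f t) t := by
  have hdiff : DifferentiableWithinAt 𝕜 (iteratedDerivWithin m f Set.univ) Set.univ t :=
    hf.contDiffWithinAt.differentiableWithinAt_iteratedDerivWithin
      (mod_cast ENat.natCast_lt_top m) (by simp [uniqueDiffOn_univ])
  rw [iteratedDerivWithin_univ, differentiableWithinAt_univ] at hdiff
  simpa only [iteratedDeriv_succ] using hdiff.hasDerivAt

theorem hasDerivAt_polyDeriv {f : 𝕜 → F} {t : 𝕜} (hf : ContDiffAt 𝕜 ∞ f t) (p : 𝕜[X]) :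
    HasDerivAt (fun u => polyDeriv f u p) (polyDeriv f t (X * p)) t := by
  induction p using Polynomial.induction_on' with
  | add p q hp hq => simpa only [mul_add, map_add] using hp.fun_add hq
  | monomial m a =>
    simpa only [X_mul_monomial, polyDeriv_monomial] using
      (hasDerivAt_iteratedDeriv hf m).fun_const_smul a

theorem contDiffOn_of_hasDerivAt_comp {f : 𝕜 → F} {g : F → F} {s : Set 𝕜} (hs : IsOpen s)
    (hg : ContDiff 𝕜 ∞ g) (hf : ∀ u ∈ s, HasDerivAt f (g (f u)) u) : ContDiffOn 𝕜 ∞ f s := by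
  have hdiff : DifferentiableOn 𝕜 f s := fun u hu =>
    (hf u hu).differentiableAt.differentiableWithinAt
  refine contDiffOn_infty.2 fun n => ?_
  induction n with
  | zero => exact contDiffOn_zero.2 hdiff.continuousOn
  | succ n ih =>
    rw [Nat.cast_succ, contDiffOn_succ_iff_deriv_of_isOpen hs]
    refine ⟨hdiff, by simp, ?_⟩
    exact ((hg.of_le (mod_cast le_top)).comp_contDiffOn ih).congr fun u hu => (hf u hu).deriv

end DifferentialOperator

section Riccati

variable {𝕜 : Type*} [NontriviallyNormedField 𝕜] {f : 𝕜 → 𝕜} {s : Set 𝕜} {t : 𝕜}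

theorem hasDerivAt_one_add_pow_sub_one (hf : HasDerivAt f (-(f t * (1 + f t))) t) (n : ℕ) :
    HasDerivAt (fun u => (1 + f u) ^ n - 1) (n * ((1 + f t) ^ n - (1 + f t) ^ (n + 1))) t := by
  refine (((hf.const_add 1).fun_pow n).sub_const 1).congr_deriv ?_
  cases n with
  | zero => simp
  | succ n => rw [Nat.add_sub_cancel]; ring

theorem polyDeriv_descPochhammer_comp_of_riccati (hs : IsOpen s)
    (hf : ∀ u ∈ s, HasDerivAt f (-(f u * (1 + f u))) u) (n : ℕ) (ht : t ∈ s) :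
    polyDeriv f t ((descPochhammer 𝕜 n).comp (X - 1)) =
      (-1) ^ n * n.factorial * ((1 + f t) ^ (n + 1) - 1) := by
  induction n generalizing t with
  | zero =>
    rw [descPochhammer_zero, one_comp, ← monomial_zero_one, polyDeriv_monomial]
    simp
  | succ n ih =>
    have hsmooth : ContDiffAt 𝕜 ∞ f t :=
      (contDiffOn_of_hasDerivAt_comp (g := fun x => -(x * (1 + x))) hs (by fun_prop) hf).contDiffAt
        (hs.mem_nhds ht)
    have hderiv : HasDerivAt (fun u => polyDeriv f u ((descPochhammer 𝕜 n).comp (X - 1)))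
        ((-1) ^ n * n.factorial *
          ((n + 1 : ℕ) * ((1 + f t) ^ (n + 1) - (1 + f t) ^ (n + 1 + 1)))) t :=
      ((hasDerivAt_one_add_pow_sub_one (hf t ht) (n + 1)).const_mul _).congr_of_eventuallyEq
        (Filter.eventuallyEq_of_mem (hs.mem_nhds ht) fun _ => ih)
    rw [descPochhammer_succ_comp_X_sub_one, descPochhammer_succ_left, map_sub,
      (hasDerivAt_polyDeriv hsmooth _).unique hderiv, ← Nat.cast_succ, Nat.cast_smul_eq_nsmul,
      map_nsmul, ih ht, Nat.factorial_succ, nsmul_eq_mul]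
    push_cast
    ring

theorem sum_coeff_descPochhammer_mul_iteratedDeriv (f : 𝕜 → 𝕜) (t : 𝕜) (n : ℕ) :
    ∑ m ∈ Icc 1 (n + 1), (descPochhammer 𝕜 (n + 1)).coeff m * iteratedDeriv (m - 1) f t =
      polyDeriv f t ((descPochhammer 𝕜 n).comp (X - 1)) := by
  have hdeg : ((descPochhammer 𝕜 n).comp (X - 1)).natDegree < n + 1 := by
    rw [natDegree_comp, descPochhammer_natDegree, ← C_1, natDegree_X_sub_C, mul_one]
    exact n.lt_succ_self
  rw [polyDeriv_eq_sum_range f t hdeg, ← Ico_add_one_right_eq_Icc, sum_Ico_eq_sum_range,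
    descPochhammer_succ_left]
  simp [add_comm 1, coeff_X_mul]

theorem stmt_6_general [CharZero 𝕜] (hs : IsOpen s)
    (hf : ∀ u ∈ s, HasDerivAt f (-(f u * (1 + f u))) u) (k : ℕ) (ht : t ∈ s) :
    (1 + f t) ^ k = 1 + ((-1) ^ (k - 1) / (k - 1).factorial) *
      ∑ m ∈ Icc 1 k, (descPochhammer 𝕜 k).coeff m * iteratedDeriv (m - 1) f t := by
  cases k with
  | zero => simp
  | succ n =>
    have hfact : (n.factorial : 𝕜) ≠ 0 := mod_cast n.factorial_ne_zero
    have hsign : (-1 : 𝕜) ^ n * (-1) ^ n = 1 := by rw [← mul_pow]; simp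
    rw [sum_coeff_descPochhammer_mul_iteratedDeriv,
      polyDeriv_descPochhammer_comp_of_riccati hs hf n ht, Nat.add_sub_cancel]
    field_simp
    linear_combination (1 - (1 + f t) ^ (n + 1)) * hsign

end Riccati

theorem one_div_one_sub_inv {K : Type*} [Field K] {x : K} (h0 : x ≠ 0) (h1 : x ≠ 1) :
    1 / (1 - x⁻¹) = 1 + 1 / (x - 1) := by
  have hsub : x - 1 ≠ 0 := sub_ne_zero.2 h1
  rw [show 1 - x⁻¹ = (x - 1) / x by field_simp]
  field_simp
  ring

theorem hasDerivAt_one_div_sub_one {𝕜 : Type*} [NontriviallyNormedField 𝕜] {g : 𝕜 → 𝕜} {t : 𝕜}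
    (hg : HasDerivAt g (g t) t) (h1 : g t ≠ 1) :
    HasDerivAt (fun u => 1 / (g u - 1)) (-(1 / (g t - 1) * (1 + 1 / (g t - 1)))) t := by
  have hsub : g t - 1 ≠ 0 := sub_ne_zero.2 h1
  refine ((hasDerivAt_const t 1).fun_div (hg.sub_const 1) hsub).congr_deriv ?_
  field_simp
  ring

theorem stmt_6 (k : ℕ) (hk : 1 ≤ k) (t : ℝ) (ht : t ≠ 0) :
    (1 / (1 - Real.exp (-t))) ^ k =
      1 + ((-1 : ℝ) ^ (k - 1) / (Nat.factorial (k - 1) : ℝ)) *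
        ∑ m ∈ Finset.Icc 1 k,
          s1 k m * iteratedDeriv (m - 1) (fun t : ℝ => 1 / (Real.exp t - 1)) t := by
  rw [Real.exp_neg, one_div_one_sub_inv (Real.exp_ne_zero t) (mt (Real.exp_eq_one_iff t).1 ht)]
  exact stmt_6_general isOpen_ne (fun u hu => hasDerivAt_one_div_sub_one (Real.hasDerivAt_exp u)
    (mt (Real.exp_eq_one_iff u).1 hu)) k ht
end

section
/- Let λ and α be nonzero real numbers and k ≥ 1 an integer. For every real number t with λ e^{α t} ≠ 1, the k-th derivative of the function h(t) = 1/(λ e^{α t} − 1) satisfies h^{(k)}(t) = (−1)^k α^k Σ_{m=1}^{k+1} (m−1)! S(k+1, m) (1/(λ e^{α t} − 1))^m. -/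
open Real Finset

/-!
The function `u = 1 / (λ e ^ (α t) - 1)` solves the autonomous equation `u' = -α (u + u²)`. Along a
solution of `u' = q(u)`, differentiating `p(u)` in `t` applies the operator `q D` to the
polynomial `p`, so the `k`-th derivative of `u` is `((q D) ^ k X)(u)`. For `q = X + X²` the
coefficients `(m - 1)! S(k + 1, m)` arise from the recurrence of the Stirling numbers. The explicit
formula for `m! S(n, m)` is the `m`-th forward difference of `x ^ n` at `0`, which obeys the same
recurrence by the Leibniz rule for `x * x ^ n`.
-/

section ForwardDifference

open scoped fwdDiff

variable {R : Type*} [CommRing R]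

lemma fwdDiff_iter_succ_id_mul (h : R) (f : R → R) (m : ℕ) (y : R) :
    (Δ_[h])^[m + 1] (fun x ↦ x * f x) y =
      (y + (m + 1) * h) * (Δ_[h])^[m + 1] f y + (m + 1) * h * (Δ_[h])^[m] f y := by
  induction m generalizing y with
  | zero =>
    simp only [zero_add, Function.iterate_one, Function.iterate_zero, id_eq, fwdDiff]
    push_cast
    ring
  | succ m ih =>
    have shift_eq : (Δ_[h])^[m] f (y + h) = (Δ_[h])^[m + 1] f y + (Δ_[h])^[m] f y := by
      rw [Function.iterate_succ_apply', fwdDiff, sub_add_cancel]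
    rw [Function.iterate_succ_apply' _ (m + 1), fwdDiff, ih, ih,
      Function.iterate_succ_apply' _ (m + 1) f, fwdDiff, shift_eq]
    push_cast
    ring

lemma fwdDiff_iter_pow_zero_eq_factorial_mul_stirlingSecond (n m : ℕ) :
    (Δ_[1])^[m] (fun x : R ↦ x ^ n) 0 = (m.factorial * n.stirlingSecond m : ℕ) := by
  induction n generalizing m with
  | zero =>
    cases m with
    | zero => simp
    | succ m => rw [fwdDiff_iter_pow_eq_zero_of_lt m.succ_pos]; simp
  | succ n ih =>
    cases m with
    | zero => simp
    | succ m =>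
      simp only [pow_succ']
      rw [fwdDiff_iter_succ_id_mul, ih, ih, Nat.stirlingSecond_succ_succ, Nat.factorial_succ]
      push_cast
      ring

end ForwardDifference

lemma S2_eq_stirlingSecond_s9 {n : ℕ} (hn : n ≠ 0) (m : ℕ) : S2 n m = n.stirlingSecond m := by
  have sum_eq : ∑ ℓ ∈ Icc 1 m, (-1 : ℝ) ^ (m - ℓ) * m.choose ℓ * (ℓ : ℝ) ^ n =
      m.factorial * n.stirlingSecond m := by
    have h := fwdDiff_iter_pow_zero_eq_factorial_mul_stirlingSecond (R := ℝ) n m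
    rw [fwdDiff_iter_eq_sum_shift, sum_range_eq_add_Ico _ m.succ_pos] at h
    simpa [hn, Ico_add_one_right_eq_Icc] using h
  rw [S2, sum_eq, one_div, inv_mul_cancel_left₀ (by positivity)]

section Polynomial

open Polynomial

lemma pow_smul_derivative_X_eq_sum_stirlingSecond {R : Type*} [CommSemiring R] (k : ℕ) :
    (((X + X ^ 2 : R[X]) • derivative) ^ k : Module.End R R[X]) X =
      ∑ m ∈ range (k + 1),
        ((m.factorial * (k + 1).stirlingSecond (m + 1) : ℕ) : R[X]) * X ^ (m + 1) := by
  induction k with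
  | zero => simp [Nat.stirlingSecond_self]
  | succ k ih =>
    let b (m : ℕ) : R[X] := (m.factorial * (k + 1).stirlingSecond m : ℕ)
    have b_zero : b 0 = 0 := by simp [b]
    have b_top : b (k + 2) = 0 := by simp [b, Nat.stirlingSecond_eq_zero_of_lt]
    have coeff_recurrence (m : ℕ) :
        ((m.factorial * (k + 2).stirlingSecond (m + 1) : ℕ) : R[X]) = b (m + 1) + b m := by
      simp only [b, Nat.stirlingSecond_succ_succ (k + 1), Nat.factorial_succ]
      push_cast
      ring
    rw [pow_succ', Module.End.mul_apply, ih, LinearMap.smul_apply, smul_eq_mul]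
    calc (X + X ^ 2) * derivative (∑ m ∈ range (k + 1),
          ((m.factorial * (k + 1).stirlingSecond (m + 1) : ℕ) : R[X]) * X ^ (m + 1))
      _ = ∑ m ∈ range (k + 1), (b (m + 1) * X ^ (m + 1) + b (m + 1) * X ^ (m + 2)) := by
        rw [derivative_sum, mul_sum]
        refine sum_congr rfl fun m _ ↦ ?_
        rw [derivative_natCast_mul, derivative_X_pow_succ]
        simp only [b, Nat.factorial_succ, map_add, map_natCast, map_one]
        push_cast
        ring
      _ = ∑ m ∈ range (k + 2), b (m + 1) * X ^ (m + 1) +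
          ∑ m ∈ range (k + 2), b m * X ^ (m + 1) := by
        rw [sum_add_distrib, sum_range_succ _ (k + 1), sum_range_succ' (fun m ↦ b m * _) (k + 1),
          b_zero, b_top]
        simp only [zero_mul, add_zero]
      _ = _ := by simp only [← sum_add_distrib, ← add_mul, coeff_recurrence]

lemma iteratedDeriv_eq_eval_of_hasDerivAt_eval {𝕜 : Type*} [NontriviallyNormedField 𝕜] {u : 𝕜 → 𝕜}
    {q : 𝕜[X]} {t : 𝕜} (hu : ∀ᶠ s in nhds t, HasDerivAt u (q.eval (u s)) s) (k : ℕ) :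
    iteratedDeriv k u t = (((q • derivative) ^ k : Module.End 𝕜 𝕜[X]) X).eval (u t) := by
  induction k generalizing t with
  | zero => simp
  | succ k ih =>
    set p : 𝕜[X] := ((q • derivative) ^ k : Module.End 𝕜 𝕜[X]) X
    have iteratedDeriv_eventuallyEq : iteratedDeriv k u =ᶠ[nhds t] fun s ↦ p.eval (u s) :=
      hu.eventually_nhds.mono fun s hs ↦ ih hs
    have hasDerivAt_eval : HasDerivAt (fun s ↦ p.eval (u s))
        (p.derivative.eval (u t) * q.eval (u t)) t :=
      (p.hasDerivAt (u t)).comp t hu.self_of_nhds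
    rw [iteratedDeriv_succ, iteratedDeriv_eventuallyEq.deriv_eq, hasDerivAt_eval.deriv, pow_succ',
      Module.End.mul_apply, LinearMap.smul_apply, smul_eq_mul, eval_mul, mul_comm]

lemma iteratedDeriv_eq_sum_stirlingSecond {𝕜 : Type*} [NontriviallyNormedField 𝕜] {u : 𝕜 → 𝕜}
    {c t : 𝕜} (hu : ∀ᶠ s in nhds t, HasDerivAt u (c * (u s + u s ^ 2)) s) (k : ℕ) :
    iteratedDeriv k u t =
      c ^ k * ∑ m ∈ range (k + 1),
        (m.factorial : 𝕜) * (k + 1).stirlingSecond (m + 1) * u t ^ (m + 1) := by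
  have hu_eval : ∀ᶠ s in nhds t, HasDerivAt u ((c • (X + X ^ 2 : 𝕜[X])).eval (u s)) s := by
    simpa only [eval_smul, eval_add, eval_X, eval_pow, smul_eq_mul] using hu
  rw [iteratedDeriv_eq_eval_of_hasDerivAt_eval hu_eval, smul_assoc, _root_.smul_pow,
    LinearMap.smul_apply, pow_smul_derivative_X_eq_sum_stirlingSecond]
  simp [eval_finsetSum]

end Polynomial

section Exponential

open NormedSpace (exp)

variable {𝕜 : Type*} [RCLike 𝕜]

lemma hasDerivAt_one_div_mul_exp_sub_one {l a t : 𝕜} (ht : l * exp (a * t) ≠ 1) :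
    HasDerivAt (fun s ↦ 1 / (l * exp (a * s) - 1))
      (-a * (1 / (l * exp (a * t) - 1) + (1 / (l * exp (a * t) - 1)) ^ 2)) t := by
  have denom_ne_zero : l * exp (a * t) - 1 ≠ 0 := sub_ne_zero.mpr ht
  have hasDerivAt_denom : HasDerivAt (fun s ↦ l * exp (a * s) - 1) (l * (exp (a * t) * a)) t :=
    ((hasDerivAt_exp.comp t (hasDerivAt_const_mul a)).const_mul l).sub_const 1
  simp only [one_div]
  refine (hasDerivAt_denom.inv denom_ne_zero).congr_deriv ?_
  field_simp
  ring

theorem stmt_9_general (l a : 𝕜) (k : ℕ) (t : 𝕜) (ht : l * exp (a * t) ≠ 1) :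
    iteratedDeriv k (fun t : 𝕜 ↦ 1 / (l * exp (a * t) - 1)) t =
      (-1) ^ k * a ^ k *
        ∑ m ∈ Icc 1 (k + 1),
          ((m - 1).factorial : 𝕜) * (S2 (k + 1) m : 𝕜) * (1 / (l * exp (a * t) - 1)) ^ m := by
  have continuous_exp : Continuous fun s ↦ l * exp (a * s) := by
    have := NormedSpace.exp_continuous (𝔸 := 𝕜)
    fun_prop
  have eventually_hasDerivAt := (continuous_exp.continuousAt.eventually_ne ht).mono fun s hs ↦
    hasDerivAt_one_div_mul_exp_sub_one hs
  rw [iteratedDeriv_eq_sum_stirlingSecond eventually_hasDerivAt, neg_pow,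
    ← Ico_add_one_right_eq_Icc, sum_Ico_eq_sum_range]
  simp only [add_comm 1, Nat.add_sub_cancel, S2_eq_stirlingSecond_s9 k.succ_ne_zero,
    RCLike.ofReal_natCast]

end Exponential

theorem stmt_9 (l a : ℝ) (hl : l ≠ 0) (ha : a ≠ 0) (k : ℕ) (hk : 1 ≤ k) (t : ℝ)
    (ht : l * Real.exp (a * t) ≠ 1) :
    iteratedDeriv k (fun t : ℝ => 1 / (l * Real.exp (a * t) - 1)) t =
      (-1 : ℝ) ^ k * a ^ k *
        ∑ m ∈ Finset.Icc 1 (k + 1),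
          (Nat.factorial (m - 1) : ℝ) * S2 (k + 1) m *
            (1 / (l * Real.exp (a * t) - 1)) ^ m := by
  simpa only [Real.exp_eq_exp_ℝ, RCLike.ofReal_real_eq_id, id_eq] using
    stmt_9_general l a k t (by rwa [← Real.exp_eq_exp_ℝ])
end

section
/- For every integer n ≥ 1, the Euler number E_{2n} satisfies E_{2n} = 4^n Σ_{k=0}^{2n} [ Σ_{ℓ=1}^{2n−k+1} ((−1)^{ℓ−1} (ℓ−1)!/2^{ℓ−1}) S(2n−k+1, ℓ) ] ((−1)^k/2^k) C(2n, k). Equivalently, the (2n)-th derivative at t = 0 of the function t ↦ 2 e^{t/2}/(e^t + 1) equals E_{2n}/2^{2n}, with E_{2n} given by the displayed sum. -/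
open Real Finset

/-!
The function `2 exp (t / 2) / (exp t + 1)` is `exp (-t / 2) * (2 * σ t)`, where the sigmoid `σ`
solves the logistic equation `σ' = σ * (1 - σ)`. Differentiating a power gives
`(σ ^ l)' = l * σ ^ l - l * σ ^ (l + 1)`, so the coefficients of `σ⁽ⁿ⁾` as a polynomial in `σ`
satisfy, up to the factors `(-1) ^ l * l !`, the recurrence of the Stirling numbers of the second
kind. Leibniz' rule for the product and `σ 0 = 1 / 2` then give the Euler numbers.
-/

open scoped Nat

lemma sum_Icc_one_eq_sum_range {M : Type*} [AddCommMonoid M] (f : ℕ → M) (n : ℕ) :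
    ∑ l ∈ Icc 1 n, f l = ∑ l ∈ range n, f (l + 1) := by
  rw [range_eq_Ico, sum_Ico_add' f 0 n 1]
  rfl

section Stirling

variable {R : Type*} [CommRing R]

lemma fwdDiff_iter_pow_succ_zero (n k : ℕ) :
    (fwdDiff 1)^[k + 1] (fun x : R ↦ x ^ (n + 1)) 0 =
      (k + 1) * (fwdDiff 1)^[k] (fun x : R ↦ x ^ n) 1 := by
  rw [fwdDiff_iter_eq_sum_shift, fwdDiff_iter_eq_sum_shift, sum_range_succ', mul_sum]
  simp only [nsmul_one, zsmul_eq_mul, zero_add, zero_pow n.succ_ne_zero, mul_zero,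
    add_zero, zero_smul]
  refine sum_congr rfl fun l _ ↦ ?_
  have absorption : ((k : R) + 1) * k.choose l = (k + 1).choose (l + 1) * (l + 1) := by
    exact_mod_cast congrArg (Nat.cast (R := R)) (Nat.add_one_mul_choose_eq k l)
  rw [Nat.add_sub_add_right]
  push_cast
  linear_combination -(-1) ^ (k - l) * (1 + (l : R)) ^ n * absorption

theorem fwdDiff_iter_pow_zero_eq_factorial_mul_stirlingSecond_s14 (n k : ℕ) :
    (fwdDiff 1)^[k] (fun x : R ↦ x ^ n) 0 = k ! * Nat.stirlingSecond n k := by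
  induction n generalizing k with
  | zero =>
    cases k with
    | zero => simp
    | succ k =>
      rw [fwdDiff_iter_pow_eq_zero_of_lt k.succ_pos]
      simp
  | succ n ih =>
    cases k with
    | zero => simp
    | succ k =>
      have shift : (fwdDiff 1)^[k] (fun x : R ↦ x ^ n) 1 =
          (fwdDiff 1)^[k + 1] (fun x : R ↦ x ^ n) 0 + (fwdDiff 1)^[k] (fun x : R ↦ x ^ n) 0 := by
        rw [Function.iterate_succ_apply', fwdDiff, zero_add, sub_add_cancel]
      rw [fwdDiff_iter_pow_succ_zero, shift, ih, ih, Nat.stirlingSecond_succ_succ,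
        Nat.factorial_succ]
      push_cast
      ring

end Stirling

lemma S2_succ_left_eq_stirlingSecond (n k : ℕ) : S2 (n + 1) k = Nat.stirlingSecond (n + 1) k := by
  have alternating_sum : (k ! : ℝ) * Nat.stirlingSecond (n + 1) k =
      ∑ l ∈ Icc 1 k, (-1 : ℝ) ^ (k - l) * k.choose l * (l : ℝ) ^ (n + 1) := by
    rw [← fwdDiff_iter_pow_zero_eq_factorial_mul_stirlingSecond_s14, fwdDiff_iter_eq_sum_shift,
      sum_range_succ', sum_Icc_one_eq_sum_range]
    simp
  rw [S2, ← alternating_sum, one_div, inv_mul_cancel_left₀ (by positivity)]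

/-- The coefficient of `u ^ (l + 1)` in the `n`-th derivative of a solution `u` of the logistic
equation `u' = u * (1 - u)`. -/
def logisticCoeff (n l : ℕ) : ℤ :=
  (-1) ^ l * l ! * Nat.stirlingSecond (n + 1) (l + 1)

lemma logisticCoeff_zero_zero : logisticCoeff 0 0 = 1 := by
  simp [logisticCoeff, Nat.stirlingSecond_self]

-- For `l = 0` the truncated index `l - 1` is harmless, since its factor `l` vanishes.
lemma logisticCoeff_succ_left (n l : ℕ) :
    logisticCoeff (n + 1) l = (l + 1) * logisticCoeff n l - l * logisticCoeff n (l - 1) := by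
  cases l with
  | zero => simp [logisticCoeff, Nat.stirlingSecond_one_right]
  | succ l =>
    simp only [logisticCoeff, Nat.stirlingSecond_succ_succ (n + 1), Nat.factorial_succ,
      Nat.add_sub_cancel]
    push_cast
    ring

lemma logisticCoeff_eq_zero_of_lt {n l : ℕ} (h : n < l) : logisticCoeff n l = 0 := by
  simp [logisticCoeff, Nat.stirlingSecond_eq_zero_of_lt (Nat.succ_lt_succ h)]

lemma sum_logisticCoeff_succ_mul_pow {R : Type*} [CommRing R] (n : ℕ) (u : R) :
    ∑ l ∈ range (n + 2), (logisticCoeff (n + 1) l : R) * u ^ (l + 1) =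
      ∑ l ∈ range (n + 1), (logisticCoeff n l : R) * ((l + 1) * u ^ l * (u * (1 - u))) := by
  calc ∑ l ∈ range (n + 2), (logisticCoeff (n + 1) l : R) * u ^ (l + 1)
      = ∑ l ∈ range (n + 2), ((l : R) + 1) * logisticCoeff n l * u ^ (l + 1) -
          ∑ l ∈ range (n + 2), (l : R) * logisticCoeff n (l - 1) * u ^ (l + 1) := by
        rw [← sum_sub_distrib]
        refine sum_congr rfl fun l _ ↦ ?_
        rw [logisticCoeff_succ_left]
        push_cast
        ring
    _ = ∑ l ∈ range (n + 1), ((l : R) + 1) * logisticCoeff n l * u ^ (l + 1) -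
          ∑ l ∈ range (n + 1), ((l : R) + 1) * logisticCoeff n l * u ^ (l + 2) := by
        rw [sum_range_succ _ (n + 1), sum_range_succ' _ (n + 1),
          logisticCoeff_eq_zero_of_lt n.lt_succ_self]
        simp
    _ = ∑ l ∈ range (n + 1), (logisticCoeff n l : R) * ((l + 1) * u ^ l * (u * (1 - u))) := by
        rw [← sum_sub_distrib]
        exact sum_congr rfl fun l _ ↦ by ring

theorem iteratedDeriv_eq_sum_logisticCoeff {𝕜 : Type*} [NontriviallyNormedField 𝕜] {u : 𝕜 → 𝕜}
    (hu : ∀ x, HasDerivAt u (u x * (1 - u x)) x) (n : ℕ) :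
    iteratedDeriv n u = fun x ↦ ∑ l ∈ range (n + 1), (logisticCoeff n l : 𝕜) * u x ^ (l + 1) := by
  induction n with
  | zero => simp [logisticCoeff_zero_zero]
  | succ n ih =>
    ext x
    rw [iteratedDeriv_succ, ih, sum_logisticCoeff_succ_mul_pow]
    refine (HasDerivAt.fun_sum fun l _ ↦ ?_).deriv
    simpa using ((hu x).pow (l + 1)).const_mul (logisticCoeff n l : 𝕜)

theorem iteratedDeriv_exp_const_mul_mul_sigmoid (c : ℝ) (n : ℕ) (t : ℝ) :
    iteratedDeriv n (fun t ↦ rexp (c * t) * sigmoid t) t =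
      ∑ k ∈ range (n + 1), n.choose k * (c ^ k * rexp (c * t)) *
        ∑ l ∈ range (n - k + 1), logisticCoeff (n - k) l * sigmoid t ^ (l + 1) := by
  have exp_contDiff : ContDiff ℝ n fun t : ℝ ↦ rexp (c * t) := by fun_prop
  have sigmoid_contDiff : ContDiff ℝ n sigmoid := contDiff_sigmoid.of_le le_top
  rw [iteratedDeriv_fun_mul exp_contDiff.contDiffAt sigmoid_contDiff.contDiffAt]
  simp only [iteratedDeriv_exp_const_mul, iteratedDeriv_eq_sum_logisticCoeff hasDerivAt_sigmoid]

lemma two_mul_exp_half_div_eq_exp_mul_sigmoid (t : ℝ) :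
    2 * rexp (t / 2) / (rexp t + 1) = 2 * (rexp (-1 / 2 * t) * sigmoid t) := by
  have exp_half : rexp (t / 2) = rexp (-1 / 2 * t) * rexp t := by
    rw [← exp_add]
    congr 1
    ring
  rw [exp_half, sigmoid_def, exp_neg]
  field_simp

lemma sum_S2_eq_two_mul_sum_logisticCoeff (n : ℕ) :
    ∑ ℓ ∈ Icc 1 (n + 1), ((-1 : ℝ) ^ (ℓ - 1) * ((ℓ - 1)! : ℝ) / 2 ^ (ℓ - 1)) * S2 (n + 1) ℓ =
      2 * ∑ l ∈ range (n + 1), logisticCoeff n l * (2⁻¹ : ℝ) ^ (l + 1) := by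
  rw [sum_Icc_one_eq_sum_range, mul_sum]
  refine sum_congr rfl fun l _ ↦ ?_
  rw [S2_succ_left_eq_stirlingSecond, logisticCoeff, Nat.add_sub_cancel, inv_pow]
  push_cast
  field_simp
  ring

theorem stmt_14_general (m : ℕ) :
    iteratedDeriv m (fun t : ℝ ↦ 2 * rexp (t / 2) / (rexp t + 1)) 0 =
      ∑ k ∈ range (m + 1),
        (∑ ℓ ∈ Icc 1 (m - k + 1),
          ((-1 : ℝ) ^ (ℓ - 1) * ((ℓ - 1)! : ℝ) / 2 ^ (ℓ - 1)) * S2 (m - k + 1) ℓ) *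
          ((-1 : ℝ) ^ k / 2 ^ k) * (m.choose k : ℝ) := by
  simp only [two_mul_exp_half_div_eq_exp_mul_sigmoid, sum_S2_eq_two_mul_sum_logisticCoeff]
  rw [iteratedDeriv_const_mul_field, iteratedDeriv_exp_const_mul_mul_sigmoid, mul_sum]
  refine sum_congr rfl fun k _ ↦ ?_
  rw [mul_zero, exp_zero, sigmoid_zero, div_pow]
  ring

theorem stmt_14 (n : ℕ) (hn : 1 ≤ n) :
    2 ^ (2 * n) *
        iteratedDeriv (2 * n) (fun t : ℝ => 2 * Real.exp (t / 2) / (Real.exp t + 1)) 0 =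
      4 ^ n *
        ∑ k ∈ Finset.range (2 * n + 1),
          (∑ ℓ ∈ Finset.Icc 1 (2 * n - k + 1),
            ((-1 : ℝ) ^ (ℓ - 1) * (Nat.factorial (ℓ - 1) : ℝ) / 2 ^ (ℓ - 1)) *
              S2 (2 * n - k + 1) ℓ) *
            ((-1 : ℝ) ^ k / 2 ^ k) * (Nat.choose (2 * n) k : ℝ) := by
  rw [stmt_14_general, pow_mul]
  norm_num only
end

section
/- For every integer n ≥ 1, the Stirling numbers of the second kind satisfy Σ_{k=0}^{2n−1} [ Σ_{ℓ=1}^{2n−k} ((−1)^{ℓ−1} (ℓ−1)!/2^{ℓ−1}) S(2n−k, ℓ) ] ((−1)^k/2^k) C(2n−1, k) = 0. -/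
open Real Finset

/-!
Since `∑ₙ S(n, k) xⁿ / n! = (eˣ - 1)ᵏ / k!` away from `n = 0`, differentiating once and summing a
geometric series shows that the inner sums `∑_ℓ (-1)^(ℓ-1) (ℓ-1)! / 2^(ℓ-1) S(m+1, ℓ)` have
exponential generating function `eˣ / (1 + (eˣ - 1) / 2) = e^(x/2) / cosh(x/2)`. The outer sum is
the binomial convolution with the coefficients of `e^(-x/2)`, so it is the coefficient of
`x^(2n-1) / (2n-1)!` in `1 / cosh(x/2)`, which vanishes because this series is even.
-/

section PowerSeries

open PowerSeries

lemma rescale_C {R : Type*} [CommSemiring R] (a r : R) : rescale a (C r) = C r := by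
  ext n
  rcases eq_or_ne n 0 with rfl | hn <;> simp [coeff_C, *]

lemma constantCoeff_rescale {R : Type*} [CommSemiring R] (a : R) (f : R⟦X⟧) :
    constantCoeff (rescale a f) = constantCoeff f := by
  rw [← coeff_zero_eq_constantCoeff_apply, coeff_rescale, pow_zero, one_mul,
    coeff_zero_eq_constantCoeff_apply]

section CommRing

variable {R : Type*} [CommRing R]

lemma coeff_eq_zero_of_evalNegHom_eq_self [IsAddTorsionFree R] {f : R⟦X⟧}
    (hf : evalNegHom f = f) {n : ℕ} (hn : Odd n) : coeff n f = 0 := by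
  have h : (-1) ^ n * coeff n f = coeff n f := by
    rw [← coeff_rescale]
    exact congrArg (coeff n) hf
  rwa [hn.neg_one_pow, neg_one_mul, neg_eq_self] at h

lemma coeff_mul_eq_sum_of_mul_one_sub_eq_one {u v : R⟦X⟧} (hu : X ∣ u) (hv : v * (1 - u) = 1)
    (f : R⟦X⟧) {m N : ℕ} (hm : m < N) :
    coeff m (f * v) = ∑ r ∈ range N, coeff m (f * u ^ r) := by
  have geom : f * v = ∑ r ∈ range N, f * u ^ r + u ^ N * (f * v) := by
    rw [← mul_sum]
    linear_combination f * (∑ r ∈ range N, u ^ r) * hv - f * v * mul_neg_geom_sum u N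
  have tail : coeff m (u ^ N * (f * v)) = 0 :=
    X_pow_dvd_iff.1 ((pow_dvd_pow_of_dvd hu N).mul_right _) m hm
  rw [geom, map_add, tail, add_zero, map_sum]

variable (R) [Algebra ℚ R]

lemma X_dvd_exp_sub_one : (X : R⟦X⟧) ∣ exp R - 1 := by
  simp [X_dvd_iff]

variable {R}

lemma rescale_exp_mul_rescale_neg_exp (a : R) :
    rescale a (exp R) * rescale (-a) (exp R) = 1 := by
  rw [exp_mul_exp_eq_exp_add, add_neg_cancel, rescale_zero_apply, constantCoeff_exp, map_one]

lemma factorial_mul_coeff_rescale_exp (a : R) (n : ℕ) :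
    (n.factorial : R) * coeff n (rescale a (exp R)) = a ^ n := by
  have h : (n.factorial : R) * algebraMap ℚ R (1 / n.factorial) = 1 := by
    rw [← map_natCast (algebraMap ℚ R), ← map_mul,
      mul_one_div_cancel (Nat.cast_ne_zero.2 n.factorial_ne_zero), map_one]
  rw [coeff_rescale, coeff_exp, mul_left_comm, h, mul_one]

lemma factorial_mul_coeff_mul_rescale_exp (f : R⟦X⟧) (a : R) (n : ℕ) :
    (n.factorial : R) * coeff n (f * rescale a (exp R)) =
      ∑ k ∈ range (n + 1),
        ((n - k).factorial : R) * coeff (n - k) f * a ^ k * (n.choose k : R) := by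
  rw [mul_comm f, coeff_mul, Nat.sum_antidiagonal_eq_sum_range_succ_mk, mul_sum]
  refine sum_congr rfl fun k hk => ?_
  have hfact : (n.choose k : R) * k.factorial * (n - k).factorial = n.factorial :=
    mod_cast congrArg (Nat.cast (R := R)) <|
      Nat.choose_mul_factorial_mul_factorial (mem_range_succ_iff.1 hk)
  rw [← hfact, ← factorial_mul_coeff_rescale_exp a k]
  ring

lemma factorial_mul_coeff_exp_sub_one_pow (n k : ℕ) :
    (n.factorial : R) * coeff n ((exp R - 1) ^ k) =
      ∑ i ∈ range (k + 1), (-1) ^ (k - i) * (k.choose i : R) * (i : R) ^ n := by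
  have expand : (exp R - 1) ^ k =
      ∑ i ∈ range (k + 1),
        C ((-1) ^ (k - i) * (k.choose i : R)) * rescale (i : R) (exp R) := by
    rw [sub_eq_add_neg, add_pow]
    refine sum_congr rfl fun i _ => ?_
    rw [← exp_pow_eq_rescale_exp]
    simp only [map_mul, map_pow, map_neg, map_one, map_natCast]
    ring
  rw [expand, map_sum, mul_sum]
  refine sum_congr rfl fun i _ => ?_
  rw [coeff_C_mul, mul_left_comm, factorial_mul_coeff_rescale_exp]

variable (R) in
lemma derivative_exp_sub_one_pow_succ (k : ℕ) :
    d⁄dX R ((exp R - 1) ^ (k + 1)) = ((k + 1 : ℕ) : R⟦X⟧) * (exp R * (exp R - 1) ^ k) := by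
  rw [derivative_pow, map_sub, derivative_exp, derivative_one, sub_zero, Nat.add_sub_cancel]
  ring

end CommRing

section Field

variable (K : Type*) [Field K]

variable {K} in
lemma rescale_inv (a : K) (f : K⟦X⟧) : rescale a f⁻¹ = (rescale a f)⁻¹ := by
  have hconst := constantCoeff_rescale a f
  by_cases hf : constantCoeff f = 0
  · rw [PowerSeries.inv_eq_zero.2 hf, PowerSeries.inv_eq_zero.2 (hconst.trans hf), map_zero]
  · rw [PowerSeries.eq_inv_iff_mul_eq_one (hconst.trans_ne hf), ← map_mul,
      PowerSeries.inv_mul_cancel _ hf, map_one]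

variable [Algebra ℚ K]

/-- The power series of `cosh (x / 2)`, that is `(e^(x/2) + e^(-x/2)) / 2`. The sum in
`stmt_15` is `(2n - 1)!` times the coefficient of `x^(2n-1)` in its inverse. -/
noncomputable def coshHalf : K⟦X⟧ :=
  C (1 / 2) * (rescale (1 / 2 : K) (exp K) + rescale (-(1 / 2) : K) (exp K))

lemma evalNegHom_coshHalf : evalNegHom (coshHalf K) = coshHalf K := by
  simp only [coshHalf, evalNegHom, map_mul, map_add, rescale_C, rescale_rescale, mul_neg_one,
    neg_neg]
  rw [add_comm]

lemma constantCoeff_coshHalf : constantCoeff (coshHalf K) = 1 := by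
  have : CharZero K := algebraRat.charZero K
  simp only [coshHalf, map_mul, map_add, constantCoeff_C, constantCoeff_rescale,
    constantCoeff_exp, mul_add, mul_one, add_halves]

lemma coeff_inv_coshHalf_of_odd {n : ℕ} (hn : Odd n) : coeff n (coshHalf K)⁻¹ = 0 := by
  have : CharZero K := algebraRat.charZero K
  refine coeff_eq_zero_of_evalNegHom_eq_self ?_ hn
  rw [evalNegHom, rescale_inv, ← evalNegHom, evalNegHom_coshHalf]

lemma rescale_half_exp_mul_rescale_half_exp :
    rescale (1 / 2 : K) (exp K) * rescale (1 / 2 : K) (exp K) = exp K := by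
  have : CharZero K := algebraRat.charZero K
  rw [exp_mul_exp_eq_exp_add, add_halves, rescale_one, RingHom.id_apply]

lemma rescale_neg_half_exp_mul_one_sub :
    rescale (-(1 / 2) : K) (exp K) * (1 - C (-(1 / 2) : K) * (exp K - 1)) = coshHalf K := by
  have : CharZero K := algebraRat.charZero K
  have hC : C (1 / 2 : K) + C (1 / 2) = 1 := by rw [← map_add, add_halves, map_one]
  have hpos := rescale_half_exp_mul_rescale_half_exp K
  have hneg := rescale_exp_mul_rescale_neg_exp (1 / 2 : K)
  rw [coshHalf, map_neg]
  linear_combination C (1 / 2) * rescale (1 / 2) (exp K) * hneg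
    - C (1 / 2) * rescale (-(1 / 2)) (exp K) * hpos - rescale (-(1 / 2)) (exp K) * hC

lemma coeff_inv_coshHalf_mul_rescale_half_exp (m : ℕ) :
    coeff m ((coshHalf K)⁻¹ * rescale (1 / 2 : K) (exp K)) =
      ∑ r ∈ range (m + 1), (-(1 / 2)) ^ r * coeff m (exp K * (exp K - 1) ^ r) := by
  have hpos := rescale_half_exp_mul_rescale_half_exp K
  have hneg := rescale_exp_mul_rescale_neg_exp (1 / 2 : K)
  have hinv : (coshHalf K)⁻¹ * rescale (-(1 / 2) : K) (exp K) *
      (1 - C (-(1 / 2) : K) * (exp K - 1)) = 1 := by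
    rw [mul_assoc, rescale_neg_half_exp_mul_one_sub,
      PowerSeries.inv_mul_cancel _ (constantCoeff_coshHalf K ▸ one_ne_zero)]
  have hexp : (coshHalf K)⁻¹ * rescale (1 / 2 : K) (exp K) =
      exp K * ((coshHalf K)⁻¹ * rescale (-(1 / 2) : K) (exp K)) := by
    linear_combination (coshHalf K)⁻¹ * rescale (-(1 / 2)) (exp K) * hpos
      - (coshHalf K)⁻¹ * rescale (1 / 2) (exp K) * hneg
  rw [hexp, coeff_mul_eq_sum_of_mul_one_sub_eq_one ((X_dvd_exp_sub_one K).mul_left _) hinv _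
    m.lt_succ_self]
  refine sum_congr rfl fun r _ => ?_
  rw [mul_pow, ← map_pow, mul_left_comm, coeff_C_mul]

end Field

lemma factorial_mul_S2 {n : ℕ} (hn : n ≠ 0) (k : ℕ) :
    (k.factorial : ℝ) * S2 n k = n.factorial * coeff n ((exp ℝ - 1) ^ k) := by
  have hk : (k.factorial : ℝ) ≠ 0 := Nat.cast_ne_zero.2 k.factorial_ne_zero
  rw [factorial_mul_coeff_exp_sub_one_pow, S2, ← mul_assoc, mul_one_div_cancel hk, one_mul,
    range_eq_Ico, sum_eq_sum_Ico_succ_bot (by lia : 0 < k + 1), Nat.cast_zero, zero_pow hn,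
    mul_zero, zero_add, zero_add, Ico_add_one_right_eq_Icc]

lemma factorial_mul_S2_succ_succ (m r : ℕ) :
    (r.factorial : ℝ) * S2 (m + 1) (r + 1) =
      m.factorial * coeff m (exp ℝ * (exp ℝ - 1) ^ r) := by
  have hS := factorial_mul_S2 m.add_one_ne_zero (r + 1)
  have hd := congrArg (coeff m) (derivative_exp_sub_one_pow_succ ℝ r)
  rw [coeff_derivative, ← map_natCast C, coeff_C_mul] at hd
  have hr : ((r + 1 : ℕ) : ℝ) ≠ 0 := Nat.cast_ne_zero.2 r.add_one_ne_zero
  refine mul_left_cancel₀ hr ?_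
  rw [Nat.factorial_succ, Nat.factorial_succ] at hS
  push_cast at hS hd ⊢
  linear_combination hS + (m.factorial : ℝ) * hd

lemma sum_factorial_div_two_pow_mul_S2_succ (m : ℕ) :
    ∑ ℓ ∈ Icc 1 (m + 1),
      ((-1 : ℝ) ^ (ℓ - 1) * ((ℓ - 1).factorial : ℝ) / 2 ^ (ℓ - 1)) * S2 (m + 1) ℓ =
      m.factorial * coeff m ((coshHalf ℝ)⁻¹ * rescale (1 / 2 : ℝ) (exp ℝ)) := by
  rw [coeff_inv_coshHalf_mul_rescale_half_exp, mul_sum, ← Ico_add_one_right_eq_Icc,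
    sum_Ico_eq_sum_range]
  refine sum_congr rfl fun r _ => ?_
  rw [add_comm 1 r, Nat.add_sub_cancel, ← neg_div, div_pow]
  linear_combination ((-1 : ℝ) ^ r / 2 ^ r) * factorial_mul_S2_succ_succ m r

end PowerSeries

theorem stmt_15 (n : ℕ) (hn : 1 ≤ n) :
    ∑ k ∈ Finset.range (2 * n),
        (∑ ℓ ∈ Finset.Icc 1 (2 * n - k),
          ((-1 : ℝ) ^ (ℓ - 1) * (Nat.factorial (ℓ - 1) : ℝ) / 2 ^ (ℓ - 1)) *
            S2 (2 * n - k) ℓ) *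
          ((-1 : ℝ) ^ k / 2 ^ k) * (Nat.choose (2 * n - 1) k : ℝ) = 0 := by
  obtain ⟨N, hN⟩ : ∃ N, 2 * n = N + 1 := ⟨2 * n - 1, by lia⟩
  have hodd : Odd N := ⟨n - 1, by lia⟩
  have convolution := factorial_mul_coeff_mul_rescale_exp
    ((coshHalf ℝ)⁻¹ * PowerSeries.rescale (1 / 2 : ℝ) (PowerSeries.exp ℝ)) (-(1 / 2)) N
  rw [mul_assoc, rescale_exp_mul_rescale_neg_exp, mul_one,
    coeff_inv_coshHalf_of_odd ℝ hodd, mul_zero] at convolution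
  rw [hN, Nat.add_sub_cancel, convolution]
  refine sum_congr rfl fun k hk => ?_
  rw [Nat.sub_add_comm (mem_range_succ_iff.1 hk), sum_factorial_div_two_pow_mul_S2_succ, ← neg_div,
    div_pow]
end

section
/- For every integer k ≥ 1 and every real number t, the k-th power of the function H(t) = 1/(e^t + 1) satisfies (1/(e^t + 1))^k = ((−1)^{k−1}/(k−1)!) Σ_{m=1}^{k} (−1)^{m−1} s(k, m) H^{(m−1)}(t), where H^{(m−1)} denotes the (m−1)-st derivative of H (with H^{(0)} = H). -/
open Real Finset

/-!
The logistic sigmoid `σ` solves `σ' = σ - σ²`, so with `D = d/dt` we have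
`(D - n) σⁿ = -n σⁿ⁺¹`, and hence `(D - 1) ⋯ (D - n) σ = (-1)ⁿ n! σⁿ⁺¹`. The polynomial
`(x - 1) ⋯ (x - n)` is the falling factorial `x (x - 1) ⋯ (x - n)` divided by `x`, so its
coefficients are the `s(n + 1, j + 1)`. Finally `1 / (eᵗ + 1) = σ(-t)`, and the reflection produces
the signs `(-1)ʲ`.
-/

section

open Polynomial
open scoped Nat

section Algebra

variable {R : Type*} [CommRing R]

lemma coeff_succ_descPochhammer_succ (n j : ℕ) :
    (descPochhammer R (n + 1)).coeff (j + 1) = ((descPochhammer R n).comp (X - 1)).coeff j := by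
  rw [descPochhammer_succ_left, coeff_X_mul]

lemma natDegree_descPochhammer_comp_X_sub_one [Nontrivial R] [NoZeroDivisors R] (n : ℕ) :
    ((descPochhammer R n).comp (X - 1)).natDegree = n := by
  rw [natDegree_comp, descPochhammer_natDegree, ← C_1, natDegree_X_sub_C, mul_one]

variable {A : Type*} [CommRing A] [Algebra R A]

lemma derivation_pow_sub_nsmul_pow (D : Derivation R A A) {x : A} {c : R}
    (hx : D x = x + c • x ^ 2) (n : ℕ) :
    D (x ^ (n + 1)) - (n + 1) • x ^ (n + 1) = (n + 1) • c • x ^ (n + 2) := by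
  rw [D.leibniz_pow, hx, Nat.add_sub_cancel]
  simp only [smul_eq_mul, Algebra.smul_def]
  ring

lemma aeval_derivation_descPochhammer_comp (D : Derivation R A A) {x : A} {c : R}
    (hx : D x = x + c • x ^ 2) (n : ℕ) :
    aeval (D : A →ₗ[R] A) ((descPochhammer R n).comp (X - 1)) x = n ! • c ^ n • x ^ (n + 1) := by
  induction n with
  | zero => simp
  | succ n ih =>
    have factor : (descPochhammer R (n + 1)).comp (X - 1) =
        (X - ((n + 1 : ℕ) : R[X])) * (descPochhammer R n).comp (X - 1) := by
      rw [descPochhammer_succ_right, mul_comp, sub_comp, X_comp, natCast_comp]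
      push_cast
      ring
    calc aeval (D : A →ₗ[R] A) ((descPochhammer R (n + 1)).comp (X - 1)) x
        = D (n ! • c ^ n • x ^ (n + 1)) - (n + 1) • n ! • c ^ n • x ^ (n + 1) := by
          rw [factor, map_mul, Module.End.mul_apply, ih, map_sub, aeval_X, map_natCast,
            LinearMap.sub_apply, Derivation.coeFn_coe, Module.End.natCast_apply]
      _ = n ! • c ^ n • (D (x ^ (n + 1)) - (n + 1) • x ^ (n + 1)) := by
          rw [map_nsmul, D.map_smul, smul_sub, smul_sub, smul_comm (n + 1) (n !),
            smul_comm (n + 1) (c ^ n)]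
      _ = (n + 1)! • c ^ (n + 1) • x ^ (n + 2) := by
          rw [derivation_pow_sub_nsmul_pow D hx, smul_comm (c ^ n), smul_smul, smul_smul,
            Nat.factorial_succ, mul_comm (n + 1), pow_succ c]

end Algebra

section Autonomous

variable {𝕜 : Type*} [NontriviallyNormedField 𝕜] {f : 𝕜 → 𝕜}

lemma iteratedDeriv_eq_eval_mkDerivation_pow {p : 𝕜[X]}
    (hf : ∀ t, HasDerivAt f (p.eval (f t)) t) (j : ℕ) :
    iteratedDeriv j f =
      fun t ↦ (((mkDerivation 𝕜 p : 𝕜[X] →ₗ[𝕜] 𝕜[X]) ^ j) X).eval (f t) := by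
  induction j with
  | zero => simp
  | succ j ih =>
    funext t
    rw [iteratedDeriv_succ, ih, pow_succ', Module.End.mul_apply, Derivation.coeFn_coe,
      mkDerivation_apply, smul_eq_mul, eval_mul]
    exact ((Polynomial.hasDerivAt _ (f t)).comp t (hf t)).deriv

lemma sum_coeff_mul_iteratedDeriv_eq_eval_aeval {p q : 𝕜[X]} {n : ℕ}
    (hf : ∀ t, HasDerivAt f (p.eval (f t)) t) (hq : q.natDegree < n) (t : 𝕜) :
    ∑ j ∈ range n, q.coeff j * iteratedDeriv j f t =
      (aeval (mkDerivation 𝕜 p : 𝕜[X] →ₗ[𝕜] 𝕜[X]) q X).eval (f t) := by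
  simp only [aeval_eq_sum_range' hq, iteratedDeriv_eq_eval_mkDerivation_pow hf,
    LinearMap.sum_apply, LinearMap.smul_apply, eval_finsetSum, eval_smul, smul_eq_mul]

theorem sum_coeff_descPochhammer_mul_iteratedDeriv_s18 {c : 𝕜}
    (hf : ∀ t, HasDerivAt f (f t + c * f t ^ 2) t) (n : ℕ) (t : 𝕜) :
    ∑ j ∈ range (n + 1), (descPochhammer 𝕜 (n + 1)).coeff (j + 1) * iteratedDeriv j f t =
      n ! * c ^ n * f t ^ (n + 1) := by
  have hf_eval (t : 𝕜) : HasDerivAt f ((X + c • X ^ 2 : 𝕜[X]).eval (f t)) t := by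
    simpa using hf t
  have hdegree : ((descPochhammer 𝕜 n).comp (X - 1)).natDegree < n + 1 := by
    rw [natDegree_descPochhammer_comp_X_sub_one]
    exact n.lt_succ_self
  simp only [coeff_succ_descPochhammer_succ]
  rw [sum_coeff_mul_iteratedDeriv_eq_eval_aeval hf_eval hdegree,
    aeval_derivation_descPochhammer_comp _ (mkDerivation_X 𝕜 (X + c • X ^ 2))]
  simp [mul_assoc, mul_left_comm]

end Autonomous

theorem sum_s1_mul_iteratedDeriv_sigmoid (n : ℕ) (t : ℝ) :
    ∑ j ∈ range (n + 1), s1 (n + 1) (j + 1) * iteratedDeriv j sigmoid t =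
      n ! * (-1) ^ n * sigmoid t ^ (n + 1) :=
  sum_coeff_descPochhammer_mul_iteratedDeriv_s18
    (fun t ↦ (hasDerivAt_sigmoid t).congr_deriv (by ring)) n t

lemma one_div_exp_add_one_eq_sigmoid_neg (t : ℝ) : 1 / (exp t + 1) = sigmoid (-t) := by
  rw [sigmoid_def, neg_neg, one_div, add_comm]

lemma neg_one_pow_mul_iteratedDeriv_one_div_exp_add_one (j : ℕ) (t : ℝ) :
    (-1) ^ j * iteratedDeriv j (fun t : ℝ ↦ 1 / (exp t + 1)) t = iteratedDeriv j sigmoid (-t) := by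
  simp only [one_div_exp_add_one_eq_sigmoid_neg]
  rw [iteratedDeriv_comp_neg, smul_eq_mul, ← mul_assoc, ← mul_pow, neg_one_mul, neg_neg, one_pow,
    one_mul]

end

theorem stmt_18 (k : ℕ) (hk : 1 ≤ k) (t : ℝ) :
    (1 / (Real.exp t + 1)) ^ k =
      ((-1 : ℝ) ^ (k - 1) / (Nat.factorial (k - 1) : ℝ)) *
        ∑ m ∈ Finset.Icc 1 k,
          (-1 : ℝ) ^ (m - 1) * s1 k m *
            iteratedDeriv (m - 1) (fun t : ℝ => 1 / (Real.exp t + 1)) t := by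
  obtain ⟨n, rfl⟩ := Nat.exists_eq_add_of_le' hk
  have sum_eq : ∑ m ∈ Icc 1 (n + 1), (-1 : ℝ) ^ (m - 1) * s1 (n + 1) m *
      iteratedDeriv (m - 1) (fun t : ℝ => 1 / (exp t + 1)) t =
      n.factorial * (-1) ^ n * sigmoid (-t) ^ (n + 1) := by
    rw [← sum_s1_mul_iteratedDeriv_sigmoid, ← Ico_add_one_right_eq_Icc, sum_Ico_eq_sum_range]
    refine sum_congr rfl fun j _ ↦ ?_
    rw [← neg_one_pow_mul_iteratedDeriv_one_div_exp_add_one, add_comm 1 j, Nat.add_sub_cancel]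
    ring
  have sign_sq : (-1 : ℝ) ^ n * (-1) ^ n = 1 := by rw [← mul_pow, neg_one_mul, neg_neg, one_pow]
  have factorial_ne_zero : (n.factorial : ℝ) ≠ 0 := Nat.cast_ne_zero.mpr n.factorial_ne_zero
  rw [sum_eq, one_div_exp_add_one_eq_sigmoid_neg, Nat.add_sub_cancel]
  field_simp
  linear_combination -sigmoid (-t) ^ (n + 1) * sign_sq
end
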